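/- arXiv:2502.06315 — 2 statements merged into one kernel-verified Lean document; each statement's English description precedes it below -/
import Mathlib

section
/- Extended Kalman canonical decomposition. Let N, m ≥ 1, A ∈ ℝ^{N×N} and B ∈ ℝ^{N×m}, and suppose the pair (A, B) is controllable. Then there exist an invertible matrix M ∈ ℝ^{N×N} and nonnegative integers N_1, …, N_m with N_1 + ⋯ + N_m = N such that, setting Ā = M A M⁻¹ and B̄ = M B and partitioning the row indices {1, …, N} into consecutive blocks of sizes N_1, …, N_m, the following hold: (i) the block Ā_{ij} ∈ ℝ^{N_i×N_j} of Ā is zero whenever i > j; (ii) the entries of the j-th column of B̄ lying in row-block i are zero whenever i > j; (iii) for every i with N_i ≥ 1, the pair (Ā_{ii}, B̄_{ii}) is controllable, where Ā_{ii} ∈ ℝ^{N_i×N_i} is the i-th diagonal block of Ā and B̄_{ii} ∈ ℝ^{N_i×1} is the part of the i-th column of B̄ in row-block i. -/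
/-!
Order the vectors `A^a b_i` (`b_i` the `i`-th column of `B`) lexicographically in `(i, a)` and keep
those that are not combinations of their predecessors. The kept vectors are linearly independent
(`linearIndepOn_notMem_span_Iio`) and still span, each discarded vector being a combination of
smaller kept ones (`mem_span_image_notMem_span_Iio`); since the full family spans by
controllability, they form a basis. Once `A^a b_i` is discarded so is `A^(a+1) b_i`
(`krylov_succ_mem`), so for each `i` an initial segment of length `N_i` is kept.

In this basis (`exists_krylov_basis`) every `A^n b_j` has components only in blocks `i ≤ j`, which
gives the vanishing of both `Ā` and `B̄` below the diagonal. In the `i`-th diagonal block the input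
is the first unit vector and `Ā_ii` shifts each unit vector but the last to the next one, so the
controllability matrix of that pair is the identity (`isControllable_of_shift`).
-/

/-- A pair `(A, B)` is controllable if the controllability matrix
`[B, AB, …, A^{N−1}B]` has rank `N`. -/
def IsControllable {N m : ℕ} (A : Matrix (Fin N) (Fin N) ℝ)
    (B : Matrix (Fin N) (Fin m) ℝ) : Prop :=
  (Matrix.of fun (r : Fin N) (p : Fin N × Fin m) => (A ^ (p.1 : ℕ) * B) r p.2).rank = N

/-- The row index (in `Fin N`) of the `a`-th entry of the `i`-th consecutive block, for a
partition of `{0, …, N−1}` into consecutive blocks of sizes `sz 0, …, sz (m−1)`. -/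
def blk {m N : ℕ} (sz : Fin m → ℕ) (hsz : ∑ i, sz i = N) (i : Fin m)
    (a : Fin (sz i)) : Fin N :=
  ⟨(∑ k ∈ Finset.univ.filter (fun k => k < i), sz k) + (a : ℕ), by
    have h1 : (∑ k ∈ Finset.univ.filter (fun k => k < i), sz k) +
        (∑ k ∈ Finset.univ.filter (fun k => ¬ k < i), sz k) = ∑ k, sz k :=
      Finset.sum_filter_add_sum_filter_not _ _ _
    have h2 : sz i ≤ ∑ k ∈ Finset.univ.filter (fun k => ¬ k < i), sz k :=
      Finset.single_le_sum (f := sz) (fun _ _ => Nat.zero_le _) (by simp)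
    have h3 : (a : ℕ) < sz i := a.2
    omega⟩

/-- In a family indexed by a linear order, the vectors that do not lie in the span of their
predecessors are linearly independent. -/
lemma linearIndepOn_notMem_span_Iio {K V I : Type*} [Field K] [AddCommGroup V] [Module K V]
    [LinearOrder I] (u : I → V) :
    LinearIndepOn K u {x | u x ∉ Submodule.span K (u '' Set.Iio x)} := by
  refine linearIndepOn_of_finite _ fun t ht htf => ?_
  lift t to Finset I using htf
  induction t using Finset.induction_on_max with
  | empty => simp
  | insert a s hlt ih =>
    rw [Finset.coe_insert, Set.insert_subset_iff] at ht
    rw [Finset.coe_insert]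
    exact (ih ht.2).insert fun h => ht.1 (Submodule.span_mono (Set.image_mono hlt) h)

/-- Over a well-order, the vectors outside the span of their predecessors already generate every
member of the family, using no index beyond that member's own. -/
lemma mem_span_image_notMem_span_Iio {K V I : Type*} [Field K] [AddCommGroup V] [Module K V]
    [LinearOrder I] [WellFoundedLT I] (u : I → V) (x : I) :
    u x ∈ Submodule.span K
      (u '' ({y | u y ∉ Submodule.span K (u '' Set.Iio y)} ∩ Set.Iic x)) := by
  induction x using WellFoundedLT.induction with
  | ind x ih =>
    by_cases hx : u x ∈ Submodule.span K (u '' Set.Iio x)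
    · refine Submodule.span_le.2 ?_ hx
      rintro _ ⟨y, hy, rfl⟩
      exact Submodule.span_mono (Set.image_mono (Set.inter_subset_inter_right _
        (Set.Iic_subset_Iic.2 (le_of_lt hy)))) (ih y hy)
    · exact Submodule.subset_span ⟨x, ⟨hx, le_rfl⟩, rfl⟩

/-- The orbit vectors `f^a (b i)`, indexed lexicographically: first by the input `i`, then by the
power `a`. -/
def krylov {K V : Type*} [Field K] [AddCommGroup V] [Module K V] {m : ℕ}
    (f : V →ₗ[K] V) (b : Fin m → V) (x : Fin m ×ₗ ℕ) : V :=
  (f ^ (ofLex x).2) (b (ofLex x).1)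

/-- Once `f^a (b i)` depends on its predecessors, so does `f^(a+1) (b i)`: the map `f` sends
predecessors of `(i, a)` to predecessors of `(i, a + 1)`. -/
lemma krylov_succ_mem {K V : Type*} [Field K] [AddCommGroup V] [Module K V] {m : ℕ}
    (f : V →ₗ[K] V) (b : Fin m → V) (i : Fin m) (a : ℕ)
    (h : krylov f b (toLex (i, a)) ∈
      Submodule.span K (krylov f b '' Set.Iio (toLex (i, a)))) :
    krylov f b (toLex (i, a + 1)) ∈
      Submodule.span K (krylov f b '' Set.Iio (toLex (i, a + 1))) := by
  have h1 := Submodule.mem_map_of_mem (f := f) h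
  rw [Submodule.map_span] at h1
  have h2 : krylov f b (toLex (i, a + 1)) = f (krylov f b (toLex (i, a))) := by
    simp [krylov, pow_succ']
  rw [h2]
  refine Submodule.span_mono ?_ h1
  rintro _ ⟨_, ⟨y, hy, rfl⟩, rfl⟩
  obtain ⟨⟨j, c⟩, rfl⟩ := toLex.surjective y
  refine ⟨toLex (j, c + 1), ?_, by simp [krylov, pow_succ']⟩
  rw [Set.mem_Iio, Prod.Lex.toLex_lt_toLex] at hy ⊢
  simpa using hy

/-- If the orbits of `b 0, …, b (m-1)` under `f` span `V`, then initial segments of these orbits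
form a basis of `V`, and `f^n (b i)` has no component along the orbit of `b j` for `j > i`. -/
theorem exists_krylov_basis {K V : Type*} [Field K] [AddCommGroup V] [Module K V]
    [FiniteDimensional K V] {m : ℕ} (f : V →ₗ[K] V) (b : Fin m → V)
    (hspan : Submodule.span K (Set.range (krylov f b)) = ⊤) :
    ∃ (sz : Fin m → ℕ) (bs : Module.Basis (Σ i, Fin (sz i)) K V),
      (∀ x, bs x = (f ^ (x.2 : ℕ)) (b x.1)) ∧
      ∀ (i j : Fin m) (n : ℕ) (a : Fin (sz j)), i < j →
        bs.repr ((f ^ n) (b i)) ⟨j, a⟩ = 0 := by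
  classical
  set u := krylov f b with hu
  set S : Set (Fin m ×ₗ ℕ) := {x | u x ∉ Submodule.span K (u '' Set.Iio x)} with hS
  have hli : LinearIndepOn K u S := linearIndepOn_notMem_span_Iio u
  have hfin : S.Finite := hli.finite
  have hex : ∀ i : Fin m, ∃ a : ℕ, toLex (i, a) ∉ S := by
    intro i
    by_contra! hcon
    exact Set.infinite_of_injective_forall_mem (f := fun a : ℕ => (toLex (i, a) : Fin m ×ₗ ℕ))
      (fun a c h => by simpa using h) hcon hfin
  have hSiff : ∀ i a, toLex (i, a) ∈ S ↔ a < Nat.find (hex i) := by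
    intro i a
    constructor
    · intro ha
      by_contra! hle
      refine Nat.le_induction (Nat.find_spec (hex i)) (fun n _ hn => ?_) a hle ha
      exact fun h => h (krylov_succ_mem f b i n (not_not.1 hn))
    · exact fun h => not_not.1 (Nat.find_min (hex i) h)
  let sz : Fin m → ℕ := fun i => Nat.find (hex i)
  let g : (Σ i, Fin (sz i)) → S := fun x => ⟨toLex (x.1, (x.2 : ℕ)), (hSiff _ _).2 x.2.2⟩
  have hg : Function.Injective g := by
    rintro ⟨i, a⟩ ⟨j, c⟩ h
    have h' : i = j ∧ (a : ℕ) = c := by simpa [g] using h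
    obtain ⟨rfl, h2⟩ := h'
    rw [Fin.ext h2]
  -- Only the basis vectors `(k, a)` with `k ≤ i` are needed to expand `f^n (b i)`.
  have hmem : ∀ i n, u (toLex (i, n)) ∈ Submodule.span K
      ((fun x => u (g x)) '' {x : Σ i, Fin (sz i) | x.1 ≤ i}) := by
    intro i n
    refine Submodule.span_mono ?_ (mem_span_image_notMem_span_Iio (K := K) u (toLex (i, n)))
    rintro _ ⟨y, ⟨hy, hle⟩, rfl⟩
    obtain ⟨⟨j, c⟩, rfl⟩ := toLex.surjective y
    refine ⟨⟨j, c, (hSiff j c).1 hy⟩, ?_, rfl⟩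
    rw [Set.mem_Iic, Prod.Lex.toLex_le_toLex] at hle
    rcases hle with h | h
    · exact le_of_lt h
    · exact le_of_eq h.1
  have hli' : LinearIndependent K (fun x => u (g x)) := LinearIndependent.comp hli g hg
  have htop : ⊤ ≤ Submodule.span K (Set.range fun x => u (g x)) := by
    rw [← hspan, Submodule.span_le]
    rintro _ ⟨y, rfl⟩
    obtain ⟨⟨j, c⟩, rfl⟩ := toLex.surjective y
    exact Submodule.span_mono (Set.image_subset_range _ _) (hmem j c)
  let bs := Module.Basis.mk hli' htop
  have hbs : (bs : (Σ i, Fin (sz i)) → V) = fun x => u (g x) := Module.Basis.coe_mk _ _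
  refine ⟨sz, bs, fun x => by rw [hbs]; rfl, fun i j n a hij => ?_⟩
  have h1 := hmem i n
  rw [← hbs, Module.Basis.mem_span_image] at h1
  by_contra h0
  have h2 := h1 (Finset.mem_coe.2 (Finsupp.mem_support_iff.2 h0))
  exact absurd h2 (not_le.2 hij)

lemma blk_bijective {m N : ℕ} (sz : Fin m → ℕ) (hsz : ∑ i, sz i = N) :
    Function.Bijective (fun x : Σ i, Fin (sz i) => blk sz hsz x.1 x.2) := by
  rw [Fintype.bijective_iff_injective_and_card]
  refine ⟨?_, by simp [hsz]⟩
  have key : ∀ (i j : Fin m) (a : Fin (sz i)) (c : Fin (sz j)), i < j →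
      (blk sz hsz i a : ℕ) < blk sz hsz j c := by
    intro i j a c hij
    have h1 : (∑ k ∈ Finset.univ.filter (fun k => k < i), sz k) + sz i ≤
        ∑ k ∈ Finset.univ.filter (fun k => k < j), sz k := by
      rw [add_comm, ← Finset.sum_insert (by simp)]
      refine Finset.sum_le_sum_of_subset fun k hk => ?_
      simp only [Finset.mem_insert, Finset.mem_filter, Finset.mem_univ, true_and] at hk ⊢
      rcases hk with rfl | hk
      · exact hij
      · exact hk.trans hij
    have h2 := a.2
    simp only [blk]
    omega
  rintro ⟨i, a⟩ ⟨j, c⟩ h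
  have hv : (blk sz hsz i a : ℕ) = blk sz hsz j c := congrArg Fin.val h
  rcases lt_trichotomy i j with hij | rfl | hij
  · exact absurd hv (key i j a c hij).ne
  · have : (a : ℕ) = c := by simpa [blk] using hv
    rw [Fin.ext this]
  · exact absurd hv (key j i c a hij).ne'

/-- A single-input pair in which the input is the first basis vector and each basis vector but the
last is mapped to its successor is controllable: its controllability matrix is the identity. -/
lemma isControllable_of_shift {n : ℕ} (A : Matrix (Fin n) (Fin n) ℝ)
    (B : Matrix (Fin n) (Fin 1) ℝ) (hB : ∀ a, B a 0 = if (a : ℕ) = 0 then 1 else 0)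
    (hA : ∀ a c : Fin n, (c : ℕ) + 1 < n → A a c = if (a : ℕ) = c + 1 then 1 else 0) :
    IsControllable A B := by
  have key : ∀ p : ℕ, p < n → ∀ a, (A ^ p * B) a 0 = if (a : ℕ) = p then 1 else 0 := by
    intro p
    induction p with
    | zero => intro _ a; simp [hB]
    | succ p ih =>
      intro hp a
      have hp' : p < n := by omega
      rw [pow_succ', Matrix.mul_assoc, Matrix.mul_apply, Finset.sum_eq_single ⟨p, hp'⟩]
      · rw [ih hp', hA _ _ hp]; simp
      · intro c _ hc
        rw [ih hp', if_neg (fun h => hc (Fin.ext h)), mul_zero]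
      · simp
  have h : (Matrix.of fun (r : Fin n) (p : Fin n × Fin 1) => (A ^ (p.1 : ℕ) * B) r p.2) =
      (1 : Matrix (Fin n) (Fin n) ℝ).submatrix (Equiv.refl _) (Equiv.prodUnique _ _) := by
    ext r ⟨p, q⟩
    obtain rfl : q = 0 := Subsingleton.elim _ _
    simp [key p p.2, Matrix.one_apply, Fin.ext_iff]
  rw [IsControllable, h, Matrix.rank_submatrix, Matrix.rank_one, Fintype.card_fin]

/-- **Extended Kalman canonical decomposition.** If `(A, B)` is controllable with
`A ∈ ℝ^{N×N}`, `B ∈ ℝ^{N×m}`, then there are an invertible matrix `M` and block sizes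
`N_1 + ⋯ + N_m = N` such that `Ā = M A M⁻¹` is block upper triangular, the part of the
`j`-th column of `B̄ = M B` below row-block `j` vanishes, and every nontrivial diagonal
pair `(Ā_{ii}, B̄_{ii})` is controllable. -/
theorem kalman_canonical_extended (N m : ℕ) (hN : 1 ≤ N) (hm : 1 ≤ m)
    (A : Matrix (Fin N) (Fin N) ℝ) (B : Matrix (Fin N) (Fin m) ℝ)
    (hAB : IsControllable A B) :
    ∃ M : Matrix (Fin N) (Fin N) ℝ, IsUnit M ∧
      ∃ (sz : Fin m → ℕ) (hsz : ∑ i, sz i = N),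
        (∀ (i j : Fin m) (a : Fin (sz i)) (b : Fin (sz j)), j < i →
          (M * A * M⁻¹) (blk sz hsz i a) (blk sz hsz j b) = 0) ∧
        (∀ (i j : Fin m) (a : Fin (sz i)), j < i →
          (M * B) (blk sz hsz i a) j = 0) ∧
        (∀ i : Fin m, 1 ≤ sz i →
          IsControllable
            (Matrix.of fun a b : Fin (sz i) =>
              (M * A * M⁻¹) (blk sz hsz i a) (blk sz hsz i b))
            (Matrix.of fun (a : Fin (sz i)) (_ : Fin 1) =>
              (M * B) (blk sz hsz i a) i)) := by
  set f := Matrix.toLin' A with hf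
  set bv : Fin m → (Fin N → ℝ) := fun j => B.col j with hbv
  have hpow : ∀ n j, (f ^ n) (bv j) = (A ^ n * B).col j := by
    intro n j
    rw [hf, ← Matrix.toLin'_pow, Matrix.toLin'_apply]
    rfl
  have hspan : Submodule.span ℝ (Set.range (krylov f bv)) = ⊤ := by
    rw [IsControllable, Matrix.rank_eq_finrank_span_cols] at hAB
    have h1 := Submodule.eq_top_of_finrank_eq (hAB.trans (by simp : N = _))
    rw [eq_top_iff, ← h1]
    refine Submodule.span_mono ?_
    rintro _ ⟨⟨p, j⟩, rfl⟩
    exact ⟨toLex (j, (p : ℕ)), hpow p j⟩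
  obtain ⟨sz, bs, hbs, htri⟩ := exists_krylov_basis f bv hspan
  have hsz : ∑ i, sz i = N := by
    have h := Module.finrank_eq_card_basis bs
    simpa using h.symm
  let e : (Σ i, Fin (sz i)) ≃ Fin N := Equiv.ofBijective _ (blk_bijective sz hsz)
  let bs' := bs.reindex e
  have he : ∀ i a, e.symm (blk sz hsz i a) = ⟨i, a⟩ := fun i a =>
    e.symm_apply_apply ⟨i, a⟩
  let P := bs'.toMatrix (Pi.basisFun ℝ (Fin N))
  let Q := (Pi.basisFun ℝ (Fin N)).toMatrix bs'
  have hPQ : P * Q = 1 := Module.Basis.toMatrix_mul_toMatrix_flip _ _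
  have hinv : P⁻¹ = Q := Matrix.inv_eq_right_inv hPQ
  have hMA : ∀ i j a c, (P * A * P⁻¹) (blk sz hsz i a) (blk sz hsz j c) =
      bs.repr ((f ^ ((c : ℕ) + 1)) (bv j)) ⟨i, a⟩ := by
    intro i j a c
    have h : P * A * P⁻¹ = LinearMap.toMatrix bs' bs' f := by
      rw [hinv, ← basis_toMatrix_mul_linearMap_toMatrix_mul_basis_toMatrix
        bs' (Pi.basisFun ℝ (Fin N)) bs' (Pi.basisFun ℝ (Fin N)) f,
        LinearMap.toMatrix_eq_toMatrix', hf, LinearMap.toMatrix'_toLin']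
    rw [h, LinearMap.toMatrix_apply]
    simp [bs', he, hbs, pow_succ']
  have hMB : ∀ i j a, (P * B) (blk sz hsz i a) j = bs.repr (bv j) ⟨i, a⟩ := by
    intro i j a
    have h : P.mulVec (bv j) = bs'.repr (bv j) := by
      rw [← Module.Basis.toMatrix_mulVec_repr (Pi.basisFun ℝ (Fin N)) bs' (bv j)]
      rfl
    have h2 : (P * B) (blk sz hsz i a) j = P.mulVec (bv j) (blk sz hsz i a) := rfl
    rw [h2, h]
    simp [bs', he]
  -- The kept vectors of orbit `i` are themselves basis vectors of block `i`.
  have hself : ∀ i (n : ℕ) (a : Fin (sz i)), n < sz i →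
      bs.repr ((f ^ n) (bv i)) ⟨i, a⟩ = if (a : ℕ) = n then 1 else 0 := by
    intro i n a hn
    have h := hbs ⟨i, ⟨n, hn⟩⟩
    simp only at h
    rw [← h, Module.Basis.repr_self, Finsupp.single_apply]
    simp [Fin.ext_iff, eq_comm]
  refine ⟨P, IsUnit.of_mul_eq_one _ hPQ, sz, hsz, ?_, ?_, ?_⟩
  · intro i j a c hji
    rw [hMA]
    exact htri j i _ a hji
  · intro i j a hji
    rw [hMB]
    exact htri j i 0 a hji
  · intro i hi
    refine isControllable_of_shift _ _ (fun a => ?_) fun a c hc => ?_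
    · simpa [hMB] using hself i 0 a hi
    · simpa [hMA] using hself i (c + 1) a hc
end

section
/- Reparametrization of the integration region in the characteristic triangle. Let 0 < μ_i < μ_j, x ∈ [0,1] and t ∈ ℝ. Define the sets S₁ = {(s, τ) ∈ ℝ² : t − (1−x)/μ_i ≤ s ≤ t and s − (1 − x − μ_i(t−s))/μ_j ≤ τ ≤ s} and S₂ = {(s, τ) ∈ ℝ² : t − (1−x)/μ_i ≤ τ ≤ t and τ ≤ s ≤ τ + min((1 − x − μ_i(t−τ))/(μ_j − μ_i), t − τ)}. Then S₁ = S₂. -/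
/-! Multiplying out the denominators and writing `L r = 1 - x - μi * (t - r)`, the slanted bound of
`S₁` reads `μj * (s - τ) ≤ L s` and that of `S₂` reads `(μj - μi) * (s - τ) ≤ L τ`. These are the same
inequality, since `L s - L τ = μi * (s - τ)`. The lower bounds read `0 ≤ L s` and `0 ≤ L τ`: the
second follows from the slanted bound because `(μj - μi) * (s - τ) ≥ 0`, and it implies the first
because `L` is increasing and `τ ≤ s`. Finally `s ≤ t` is the second entry of the minimum. -/

/-- **Reparametrization of the integration region in the characteristic triangle.**
For `0 < μᵢ < μⱼ`, `x ∈ [0,1]` and `t ∈ ℝ`, the region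
`S₁ = {(s, τ) : t − (1−x)/μᵢ ≤ s ≤ t and s − (1 − x − μᵢ(t−s))/μⱼ ≤ τ ≤ s}`
coincides with
`S₂ = {(s, τ) : t − (1−x)/μᵢ ≤ τ ≤ t and τ ≤ s ≤ τ + min((1 − x − μᵢ(t−τ))/(μⱼ − μᵢ), t − τ)}`. -/
theorem characteristic_triangle_reparametrization
    (μi μj : ℝ) (hμi : 0 < μi) (hij : μi < μj) (x : ℝ) (hx : x ∈ Set.Icc (0:ℝ) 1) (t : ℝ) :
    {p : ℝ × ℝ | t - (1 - x) / μi ≤ p.1 ∧ p.1 ≤ t ∧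
        p.1 - (1 - x - μi * (t - p.1)) / μj ≤ p.2 ∧ p.2 ≤ p.1} =
    {p : ℝ × ℝ | t - (1 - x) / μi ≤ p.2 ∧ p.2 ≤ t ∧ p.2 ≤ p.1 ∧
        p.1 ≤ p.2 + min ((1 - x - μi * (t - p.2)) / (μj - μi)) (t - p.2)} := by
  have hμj : 0 < μj := hμi.trans hij
  have hd : 0 < μj - μi := sub_pos.mpr hij
  have lower (r : ℝ) : t - (1 - x) / μi ≤ r ↔ 0 ≤ 1 - x - μi * (t - r) := by
    rw [sub_le_comm, le_div_iff₀ hμi, mul_comm, sub_nonneg]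
  ext ⟨s, τ⟩
  have slant : s - (1 - x - μi * (t - s)) / μj ≤ τ ↔
      s - τ ≤ (1 - x - μi * (t - τ)) / (μj - μi) := by
    rw [sub_le_comm, le_div_iff₀ hμj, le_div_iff₀ hd]
    constructor <;> intro h <;> linarith
  simp only [Set.mem_ofPred_eq, lower, slant, ← sub_le_iff_le_add', le_min_iff]
  constructor
  · rintro ⟨-, hst, hs, hτs⟩
    refine ⟨?_, hτs.trans hst, hτs, hs, by linarith⟩
    rw [le_div_iff₀ hd] at hs
    exact (mul_nonneg (sub_nonneg.mpr hτs) hd.le).trans hs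
  · rintro ⟨hL, -, hτs, hs, hst⟩
    refine ⟨?_, by linarith, hs, hτs⟩
    linarith [mul_le_mul_of_nonneg_left hτs hμi.le]
end
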